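/- There exists a Lagrangian subspace A of (⋀³V, σ) such that A contains no nonzero completely decomposable element (i.e. no nonzero element of the form v₀∧v₁∧v₂ with v₀, v₁, v₂ ∈ V) and such that dim(A ∩ F_v) ≤ 2 for every nonzero v ∈ V. (This is the nonemptiness of the set 𝕃𝔾(⋀³V)⁰ of Lagrangians parametrizing EPW sextics with the mildest possible singularities.) -/

import Mathlib

open ExteriorAlgebra

/-- The subspace `F_v = v ∧ ⋀²V = {v∧β : β ∈ ⋀²V}` of `⋀³V`, as a submodule of the
exterior algebra. -/
noncomputable def Fsub {V : Type*} [AddCommGroup V] [Module ℂ V] (v : V) :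
    Submodule ℂ (ExteriorAlgebra ℂ V) :=
  (⋀[ℂ]^2 V).map (LinearMap.mulLeft ℂ (ExteriorAlgebra.ι ℂ v))

/-!
For a basis `(eᵢ)` of `V`, the basis trivectors containing `e₀`, paired with suitable multiples of
the complementary ones, form a Darboux basis of `⋀³V`. The graphs of symmetric `10 × 10` matrices
are then Lagrangian, and these matrices form a space of dimension 55. Two families must be avoided:

* the matrices whose graph contains a given line form a family of dimension 45, and the
  decomposable lines are parametrized by `G(3, V)`, of dimension 9;
* the matrices whose graph contains a given 3-dimensional subspace form a family of dimension 28,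
  and the pairs `v`, `U` with `U ⊆ F_v` of dimension 3 have `5 + dim G(3, 10) = 26` parameters.

Both families thus have dimension at most 54. They are covered by finitely many images of `C¹` maps
from subsets of real vector spaces of dimension 108, so Hausdorff dimension, measured against
`110 = 2 · 55`, shows that their union is not the whole space of symmetric matrices.
-/

section PivotForm

variable {K M ι : Type*} [CommRing K] [AddCommGroup M] [Module K M] {m k : ℕ}

/-- The `m` vectors `g (e a) + ∑ t, κ t a • g (e t)`: a family in reduced echelon form with respect
to the finite family `g`, with pivot positions `e ∘ Sum.inl` and free entries `κ`. -/
def pivotVec (g : ι → M) (e : Fin m ⊕ Fin k ≃ ι) (κ : Fin k → Fin m → K) (a : Fin m) : M :=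
  g (e (.inl a)) + ∑ t, κ t a • g (e (.inr t))

theorem map_pivotVec {M' : Type*} [AddCommGroup M'] [Module K M'] (φ : M →ₗ[K] M') (g : ι → M)
    (e : Fin m ⊕ Fin k ≃ ι) (κ : Fin k → Fin m → K) :
    φ ∘ pivotVec g e κ = pivotVec (φ ∘ g) e κ := by
  ext a
  simp [pivotVec]

theorem linearIndependent_pivotVec {b : ι → M} (hb : LinearIndependent K b)
    (e : Fin m ⊕ Fin k ≃ ι) (κ : Fin k → Fin m → K) :
    LinearIndependent K (pivotVec b e κ) := by
  have hbe : LinearIndependent K (b ∘ e) := hb.comp e e.injective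
  rw [Fintype.linearIndependent_iff] at hbe ⊢
  intro c hc a
  refine hbe (Sum.elim c fun t => ∑ a, c a * κ t a) ?_ (.inl a)
  simp only [pivotVec, smul_add, Finset.smul_sum, Finset.sum_add_distrib, smul_smul] at hc
  rw [Finset.sum_comm] at hc
  simpa [Finset.sum_smul] using hc

theorem span_range_pivotVec_sup (g : ι → M) (e : Fin m ⊕ Fin k ≃ ι) (κ : Fin k → Fin m → K) :
    Submodule.span K (Set.range (pivotVec g e κ)) ⊔
      Submodule.span K (Set.range fun t => g (e (.inr t))) = Submodule.span K (Set.range g) := by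
  have hsum (a : Fin m) {W : Submodule K M} (hW : ∀ t, g (e (.inr t)) ∈ W) :
      ∑ t, κ t a • g (e (.inr t)) ∈ W := sum_mem fun t _ => W.smul_mem _ (hW t)
  have hg (i : ι) : g i ∈ Submodule.span K (Set.range g) := Submodule.subset_span ⟨i, rfl⟩
  apply le_antisymm
  · rw [sup_le_iff, Submodule.span_le, Submodule.span_le]
    exact ⟨Set.range_subset_iff.2 fun a => add_mem (hg _) (hsum a fun t => hg _),
      Set.range_subset_iff.2 fun t => hg _⟩
  · rw [Submodule.span_le, Set.range_subset_iff, e.symm.forall_congr_left, Sum.forall]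
    have hr (t : Fin k) : g (e (.inr t)) ∈ Submodule.span K (Set.range (pivotVec g e κ)) ⊔
        Submodule.span K (Set.range fun t => g (e (.inr t))) :=
      Submodule.mem_sup_right (Submodule.subset_span ⟨t, rfl⟩)
    refine ⟨fun a => ?_, hr⟩
    rw [SetLike.mem_coe, ← add_mem_cancel_right (hsum a hr)]
    exact Submodule.mem_sup_left (Submodule.subset_span ⟨a, rfl⟩)

end PivotForm

section PivotFormOfSubspace

variable {K M ι : Type*} [Field K] [AddCommGroup M] [Module K M] {m k : ℕ}

theorem exists_le_finrank_eq {W : Submodule K M} (hW : m ≤ Module.finrank K W) :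
    ∃ U ≤ W, Module.finrank K U = m := by
  obtain ⟨u, hu⟩ := exists_linearIndependent_of_le_finrank hW
  refine ⟨(Submodule.span K (Set.range u)).map W.subtype, Submodule.map_subtype_le _ _, ?_⟩
  rw [Submodule.finrank_map_subtype_eq, finrank_span_eq_card hu, Fintype.card_fin]

theorem exists_equiv_sum_extend [Fintype ι] (hι : Fintype.card ι = m + k) {s : Fin k → ι}
    (hs : s.Injective) : ∃ e : Fin m ⊕ Fin k ≃ ι, ∀ t, e (.inr t) = s t := by
  classical
  have hcard : Fintype.card (Fin m) = Fintype.card ((Set.range s)ᶜ : Set ι) := by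
    rw [Fintype.card_compl_set, Set.card_range_of_injective hs]
    simp [hι]
  exact ⟨((Equiv.sumComm _ _).trans ((Equiv.ofInjective s hs).sumCongr
    (Fintype.equivOfCardEq hcard))).trans (Equiv.Set.sumCompl _), by simp⟩

theorem exists_equiv_quotient_span [Fintype ι] (b : Module.Basis ι K M) (U : Submodule K M)
    (hU : Module.finrank K U = m) (hι : Fintype.card ι = m + k) :
    ∃ e : Fin m ⊕ Fin k ≃ ι, Submodule.span K (Set.range fun t => U.mkQ (b (e (.inr t)))) = ⊤ := by
  have := Module.Finite.of_basis b
  obtain ⟨J, s, hs, hspan, hind⟩ := exists_linearIndependent' K (U.mkQ ∘ b)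
  have htop : Submodule.span K (Set.range (U.mkQ ∘ b)) = ⊤ := by
    rw [Set.range_comp, ← Submodule.map_span, b.span_eq, Submodule.map_top, Submodule.range_mkQ]
  rw [htop] at hspan
  let c := Module.Basis.mk hind hspan.ge
  have : Fintype J := FiniteDimensional.fintypeBasisIndex c
  have hJ : Fintype.card J = k := by
    have hadd := U.finrank_quotient_add_finrank
    rw [Module.finrank_eq_card_basis b, Module.finrank_eq_card_basis c] at hadd
    omega
  let j : Fin k ≃ J := (Fintype.equivFinOfCardEq hJ).symm
  obtain ⟨e, he⟩ := exists_equiv_sum_extend hι (hs.comp j.injective)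
  refine ⟨e, ?_⟩
  rw [← hspan, ← j.surjective.range_comp]
  simp [he, Function.comp_def]

theorem exists_span_range_pivotVec_of_basis [Fintype ι] (b : Module.Basis ι K M)
    (U : Submodule K M) (hU : Module.finrank K U = m) (hι : Fintype.card ι = m + k) :
    ∃ (e : Fin m ⊕ Fin k ≃ ι) (κ : Fin k → Fin m → K),
      Submodule.span K (Set.range (pivotVec b e κ)) = U := by
  have := Module.Finite.of_basis b
  obtain ⟨e, he⟩ := exists_equiv_quotient_span b U hU hι
  have hrep (a : Fin m) : ∃ c : Fin k → K, ∑ t, c t • U.mkQ (b (e (.inr t))) =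
      U.mkQ (b (e (.inl a))) :=
    (Submodule.mem_span_range_iff_exists_fun K).1 (he ▸ Submodule.mem_top)
  choose c hc using hrep
  refine ⟨e, fun t a => -c a t, Submodule.eq_of_le_of_finrank_eq ?_ ?_⟩
  · rw [Submodule.span_le]
    rintro _ ⟨a, rfl⟩
    rw [SetLike.mem_coe, ← U.ker_mkQ, LinearMap.mem_ker]
    simp only [pivotVec, map_add, map_neg, map_sum, map_smul, neg_smul, Finset.sum_neg_distrib,
      hc a, add_neg_cancel]
  · rw [finrank_span_eq_card (linearIndependent_pivotVec b.linearIndependent e _), hU,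
      Fintype.card_fin]

theorem exists_span_range_pivotVec [Fintype ι] {g : ι → M} {U : Submodule K M}
    (hg : U ≤ Submodule.span K (Set.range g)) (hU : Module.finrank K U = m)
    (hι : Fintype.card ι = m + k) :
    ∃ (e : Fin m ⊕ Fin k ≃ ι) (κ : Fin k → Fin m → K),
      Submodule.span K (Set.range (pivotVec g e κ)) = U := by
  let φ := Fintype.linearCombination K g
  rw [← Fintype.range_linearCombination] at hg
  obtain ⟨s, hs⟩ := φ.rangeRestrict.exists_rightInverse_of_surjective φ.range_rangeRestrict
  let σ : U →ₗ[K] ι → K := s ∘ₗ Submodule.inclusion hg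
  have hσ : φ ∘ₗ σ = U.subtype := by
    ext u
    exact congrArg Subtype.val (LinearMap.congr_fun hs (Submodule.inclusion hg u))
  have hinj : Function.Injective σ :=
    .of_comp (f := φ) <| by rw [← LinearMap.coe_comp, hσ]; exact U.subtype_injective
  obtain ⟨e, κ, h⟩ := exists_span_range_pivotVec_of_basis (Pi.basisFun K ι)
    (LinearMap.range σ) ((LinearMap.finrank_range_of_inj hinj).trans hU) hι
  refine ⟨e, κ, ?_⟩
  have hφ : φ ∘ Pi.basisFun K ι = g := by
    classical
    ext i
    simp [φ]
  have hmap := congrArg (Submodule.map φ) h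
  rwa [Submodule.map_span, ← Set.range_comp, ← LinearMap.range_comp, hσ, Submodule.range_subtype,
    map_pivotVec, hφ] at hmap

end PivotFormOfSubspace

section HausdorffDimension

variable {E F : Type*} [NormedAddCommGroup E] [NormedSpace ℝ E] [FiniteDimensional ℝ E]
  [NormedAddCommGroup F] [NormedSpace ℝ F]

theorem dimH_image_le_finrank_of_contDiffAt {f : E → F} {s : Set E}
    (hf : ∀ x ∈ s, ContDiffAt ℝ 1 f x) : dimH (f '' s) ≤ Module.finrank ℝ E := by
  refine (dimH_image_le_of_locally_lipschitzOn fun x hx => ?_).trans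
    ((dimH_mono s.subset_univ).trans_eq (Real.dimH_univ_eq_finrank E))
  obtain ⟨C, t, ht, hC⟩ := (hf x hx).exists_lipschitzOnWith
  exact ⟨C, t, mem_nhdsWithin_of_mem_nhds ht, hC⟩

end HausdorffDimension

section MatrixContDiff

variable {𝕜 𝔽 E l m n : Type*} [NontriviallyNormedField 𝕜] [NormedField 𝔽] [NormedAlgebra 𝕜 𝔽]
  [NormedAddCommGroup E] [NormedSpace 𝕜 E] {r : WithTop ℕ∞} {x : E}

theorem contDiffAt_matrix_mul_apply [Fintype m] {A : E → Matrix l m 𝔽} {B : E → Matrix m n 𝔽}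
    (hA : ∀ i j, ContDiffAt 𝕜 r (fun p => A p i j) x)
    (hB : ∀ i j, ContDiffAt 𝕜 r (fun p => B p i j) x) (i : l) (j : n) :
    ContDiffAt 𝕜 r (fun p => (A p * B p) i j) x := by
  simp only [Matrix.mul_apply]
  exact ContDiffAt.sum fun k _ => (hA i k).mul (hB k j)

variable [Fintype n] [DecidableEq n]

theorem contDiffAt_matrix_det {A : E → Matrix n n 𝔽}
    (hA : ∀ i j, ContDiffAt 𝕜 r (fun p => A p i j) x) :
    ContDiffAt 𝕜 r (fun p => (A p).det) x := by
  simp only [Matrix.det_apply]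
  exact ContDiffAt.sum fun σ _ => (contDiffAt_prod fun i _ => hA (σ i) i).const_smul (σ.sign)

theorem contDiffAt_matrix_inv_apply [CompleteSpace 𝔽] {A : E → Matrix n n 𝔽}
    (hA : ∀ i j, ContDiffAt 𝕜 r (fun p => A p i j) x) (hx : (A x).det ≠ 0) (i j : n) :
    ContDiffAt 𝕜 r (fun p => (A p)⁻¹ i j) x := by
  simp only [Matrix.inv_def, Ring.inverse_eq_inv', Matrix.smul_apply, Matrix.adjugate_apply]
  refine ((contDiffAt_matrix_det hA).inv hx).smul (contDiffAt_matrix_det fun k l => ?_)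
  by_cases hk : k = j
  · subst hk
    simpa using contDiffAt_const
  · simpa [Matrix.updateRow_ne hk] using hA k l

end MatrixContDiff

section SymmetricMatrix

open Matrix

/-- The symmetric matrix with entries given by a function on unordered pairs of indices; in this
way `Sym2 ι → R` models the space of symmetric matrices. -/
def symMatrix {ι R : Type*} (f : Sym2 ι → R) : Matrix ι ι R :=
  Matrix.of fun i j => f s(i, j)

theorem symMatrix_isSymm {ι R : Type*} (f : Sym2 ι → R) : (symMatrix f).IsSymm :=
  Matrix.IsSymm.ext fun _ _ => congrArg f Sym2.eq_swap

theorem symMatrix_out {ι R : Type*} (f : Sym2 ι → R) (z : Sym2 ι) :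
    symMatrix f (Quot.out z).1 (Quot.out z).2 = f z :=
  congrArg f (Quot.out_eq z)

theorem exists_symMatrix_eq {ι R : Type*} {S : Matrix ι ι R} (hS : S.IsSymm) :
    ∃ f, symMatrix f = S :=
  ⟨Sym2.lift ⟨S, fun i j => (hS.apply j i)⟩, rfl⟩

variable {R ι m n : Type*} [CommRing R] [Fintype m] [DecidableEq m] [Fintype n]

/-- The symmetric block matrix with lower right block `D` that maps the columns of `X` to those
of `Y`. It is meaningful when the upper square block of `X` is invertible and such a matrix
exists. -/
noncomputable def symCompletion (X Y : Matrix (m ⊕ n) m R) (D : Matrix n n R) :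
    Matrix (m ⊕ n) (m ⊕ n) R :=
  let C := (Y.toRows₂ - D * X.toRows₂) * X.toRows₁⁻¹
  fromBlocks ((Y.toRows₁ - Cᵀ * X.toRows₂) * X.toRows₁⁻¹) Cᵀ C D

theorem symCompletion_toBlocks₂₂ {S : Matrix (m ⊕ n) (m ⊕ n) R} (hS : S.IsSymm)
    {X Y : Matrix (m ⊕ n) m R} (hX : IsUnit X.toRows₁.det) (h : S * X = Y) :
    symCompletion X Y S.toBlocks₂₂ = S := by
  obtain ⟨A, B, C, D, rfl⟩ : ∃ A B C D, S = fromBlocks A B C D :=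
    ⟨_, _, _, _, (fromBlocks_toBlocks S).symm⟩
  obtain ⟨-, hBC, -, -⟩ := isSymm_fromBlocks_iff.1 hS
  subst h
  rw [← fromRows_toRows X, fromBlocks_mul_fromRows]
  have hC : (C * X.toRows₁ + D * X.toRows₂ - D * X.toRows₂) * X.toRows₁⁻¹ = C := by
    rw [add_sub_cancel_right, mul_nonsing_inv_cancel_right _ _ hX]
  have hCt : Cᵀ = B := by rw [← hBC, transpose_transpose]
  have hA : (A * X.toRows₁ + B * X.toRows₂ - B * X.toRows₂) * X.toRows₁⁻¹ = A := by
    rw [add_sub_cancel_right, mul_nonsing_inv_cancel_right _ _ hX]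
  simp only [symCompletion, toRows₁_fromRows, toRows₂_fromRows, toBlocks_fromBlocks₂₂, hC, hCt, hA]

theorem contDiffAt_symCompletion_apply {𝕜 𝔽 E : Type*} [NontriviallyNormedField 𝕜] [NormedField 𝔽]
    [CompleteSpace 𝔽] [NormedAlgebra 𝕜 𝔽] [NormedAddCommGroup E] [NormedSpace 𝕜 E]
    {r : WithTop ℕ∞} {x : E} {X Y : E → Matrix (m ⊕ n) m 𝔽} {D : E → Matrix n n 𝔽}
    (hX : ∀ i j, ContDiffAt 𝕜 r (fun p => X p i j) x)
    (hY : ∀ i j, ContDiffAt 𝕜 r (fun p => Y p i j) x)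
    (hD : ∀ i j, ContDiffAt 𝕜 r (fun p => D p i j) x) (hx : (X x).toRows₁.det ≠ 0)
    (i j : m ⊕ n) :
    ContDiffAt 𝕜 r (fun p => symCompletion (X p) (Y p) (D p) i j) x := by
  have hinv := contDiffAt_matrix_inv_apply (A := fun p => (X p).toRows₁) (fun i => hX (.inl i)) hx
  have hC := contDiffAt_matrix_mul_apply (A := fun p => (Y p).toRows₂ - D p * (X p).toRows₂)
    (fun a b => (hY (.inr a) b).sub
      (contDiffAt_matrix_mul_apply hD (fun i => hX (.inr i)) a b)) hinv
  rcases i with i | i <;> rcases j with j | j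
  · exact contDiffAt_matrix_mul_apply (fun a b => (hY (.inl a) b).sub
      (contDiffAt_matrix_mul_apply (fun k l => hC l k) (fun i => hX (.inr i)) a b)) hinv i j
  · exact hC j i
  · exact hC i j
  · exact hD i j

end SymmetricMatrix

section SymmetricMatrixDimension

open Matrix

variable {ι E : Type*} [Fintype ι] {m k : ℕ} [NormedAddCommGroup E] [NormedSpace ℝ E]

theorem finrank_real_sym2_fun (ι : Type*) [Fintype ι] :
    Module.finrank ℝ (Sym2 ι → ℂ) = 2 * (Fintype.card ι + 1).choose 2 := by
  classical
  rw [finrank_real_of_complex, Module.finrank_fintype_fun_eq_card, Sym2.card]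

theorem exists_equiv_isUnit_det_toRows₁ {K : Type*} [Field K] (hι : Fintype.card ι = m + k)
    {X : Matrix ι (Fin m) K} (hX : LinearIndependent K X.col) :
    ∃ e : Fin m ⊕ Fin k ≃ ι, IsUnit (X.submatrix e id).toRows₁.det := by
  classical
  obtain ⟨e, κ, he⟩ := exists_span_range_pivotVec_of_basis (k := k) (Pi.basisFun K ι)
    (Submodule.span K (Set.range X.col))
    ((finrank_span_eq_card hX).trans (Fintype.card_fin m)) hι
  refine ⟨e, ?_⟩
  have hmem (a : Fin m) : ∃ c : Fin m → K, ∑ j, c j • X.col j = pivotVec (Pi.basisFun K ι) e κ a :=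
    (Submodule.mem_span_range_iff_exists_fun K).1 (he ▸ Submodule.subset_span ⟨a, rfl⟩)
  choose c hc using hmem
  suffices (X.submatrix e id).toRows₁ * (Matrix.of c)ᵀ = 1 from
    IsUnit.of_mul_eq_one _ (by rw [← det_mul, this, det_one])
  have hone (i a : Fin m) :
      pivotVec (Pi.basisFun K ι) e κ a (e (.inl i)) = (1 : Matrix (Fin m) (Fin m) K) i a := by
    simp [pivotVec, Pi.single_apply, Matrix.one_apply]
  ext i a
  rw [← hone, ← hc]
  simp [Matrix.mul_apply, mul_comm]

theorem dimH_setOf_symMatrix_mul_eq_le [FiniteDimensional ℝ E] (hι : Fintype.card ι = m + k)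
    {X Y : E → Matrix ι (Fin m) ℂ} (hX : ∀ i j, ContDiff ℝ 1 fun p => X p i j)
    (hY : ∀ i j, ContDiff ℝ 1 fun p => Y p i j) :
    dimH {f : Sym2 ι → ℂ | ∃ p, LinearIndependent ℂ (X p).col ∧ symMatrix f * X p = Y p} ≤
      (Module.finrank ℝ E + 2 * (k + 1).choose 2 : ℕ) := by
  have hk : Module.finrank ℝ (E × (Sym2 (Fin k) → ℂ)) =
      Module.finrank ℝ E + 2 * (k + 1).choose 2 := by
    rw [Module.finrank_prod, finrank_real_sym2_fun, Fintype.card_fin]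
  let Φ (e : Fin m ⊕ Fin k ≃ ι) (q : E × (Sym2 (Fin k) → ℂ)) : Matrix ι ι ℂ :=
    (symCompletion ((X q.1).submatrix e id) ((Y q.1).submatrix e id) (symMatrix q.2)).submatrix
      e.symm e.symm
  let s (e : Fin m ⊕ Fin k ≃ ι) : Set (E × (Sym2 (Fin k) → ℂ)) :=
    {q | ((X q.1).submatrix e id).toRows₁.det ≠ 0}
  let T (e : Fin m ⊕ Fin k ≃ ι) : Set (Sym2 ι → ℂ) :=
    (fun q z => Φ e q (Quot.out z).1 (Quot.out z).2) '' s e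
  refine (dimH_mono (t := ⋃ e, T e) ?_).trans ?_
  · rintro f ⟨p, hp, hf⟩
    obtain ⟨e, he⟩ := exists_equiv_isUnit_det_toRows₁ hι hp
    let S := (symMatrix f).submatrix e e
    have hS : S.IsSymm := (symMatrix_isSymm f).submatrix e
    obtain ⟨D, hD⟩ : ∃ D, symMatrix D = S.toBlocks₂₂ :=
      exists_symMatrix_eq (hS.submatrix Sum.inr)
    have hSX : S * (X p).submatrix e id = (Y p).submatrix e id := by
      rw [submatrix_mul_equiv, hf]
    refine Set.mem_iUnion.2 ⟨e, (p, D), he.ne_zero, funext fun z => ?_⟩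
    simp only [Φ, hD, symCompletion_toBlocks₂₂ hS he hSX]
    simpa [S] using symMatrix_out f z
  rw [dimH_iUnion, iSup_le_iff, ← hk]
  refine fun e => dimH_image_le_finrank_of_contDiffAt fun q hq => contDiffAt_pi.2 fun z => ?_
  refine contDiffAt_symCompletion_apply
    (X := fun q : E × (Sym2 (Fin k) → ℂ) => (X q.1).submatrix e id)
    (Y := fun q => (Y q.1).submatrix e id) (D := fun q => symMatrix q.2)
    (fun i j => ?_) (fun i j => ?_) (fun i j => ?_) hq _ _
  · exact ((hX _ _).comp contDiff_fst).contDiffAt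
  · exact ((hY _ _).comp contDiff_fst).contDiffAt
  · exact (contDiff_pi.1 contDiff_snd _).contDiffAt

end SymmetricMatrixDimension

section Darboux

open Matrix

variable {K M ι : Type*} [CommRing K] [AddCommGroup M] [Module K M]

/-- `e` and `f` are the two halves of a Darboux family for `B`: the span of `e` and `f` is a
symplectic subspace in which they span transverse Lagrangians dual to each other. -/
structure IsDarboux [DecidableEq ι] (B : LinearMap.BilinForm K M) (e f : ι → M) : Prop where
  left_left (i j : ι) : B (e i) (e j) = 0
  right_right (i j : ι) : B (f i) (f j) = 0
  left_right (i j : ι) : B (e i) (f j) = if i = j then 1 else 0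
  right_left (i j : ι) : B (f i) (e j) = if i = j then -1 else 0

variable [Fintype ι]

/-- The map `x ↦ ∑ i, x i • e i + ∑ i, (S x) i • f i`, whose range is the graph of `S` with respect
to the splitting given by `e` and `f`. -/
def graphMap (e f : ι → M) (S : Matrix ι ι K) : (ι → K) →ₗ[K] M :=
  Fintype.linearCombination K e + Fintype.linearCombination K f ∘ₗ S.mulVecLin

theorem range_graphMap_le {e f : ι → M} {W : Submodule K M} (he : ∀ i, e i ∈ W)
    (hf : ∀ i, f i ∈ W) (S : Matrix ι ι K) : LinearMap.range (graphMap e f S) ≤ W := by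
  rintro _ ⟨x, rfl⟩
  exact add_mem (sum_mem fun i _ => W.smul_mem _ (he i)) (sum_mem fun i _ => W.smul_mem _ (hf i))

namespace IsDarboux

variable [DecidableEq ι] {B : LinearMap.BilinForm K M} {e f : ι → M}

theorem apply_graphMap_right (h : IsDarboux B e f) (S : Matrix ι ι K) (x : ι → K) (i : ι) :
    B (graphMap e f S x) (f i) = x i := by
  simp [graphMap, Fintype.linearCombination_apply, h.left_right, h.right_right]

theorem apply_left_graphMap (h : IsDarboux B e f) (S : Matrix ι ι K) (x : ι → K) (i : ι) :
    B (e i) (graphMap e f S x) = (S *ᵥ x) i := by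
  simp [graphMap, Fintype.linearCombination_apply, h.left_left, h.left_right]

theorem apply_right_graphMap (h : IsDarboux B e f) (S : Matrix ι ι K) (x : ι → K) (i : ι) :
    B (f i) (graphMap e f S x) = -x i := by
  simp [graphMap, Fintype.linearCombination_apply, h.right_right, h.right_left]

theorem graphMap_injective (h : IsDarboux B e f) (S : Matrix ι ι K) :
    Function.Injective (graphMap e f S) := fun x y hxy => by
  ext i
  rw [← h.apply_graphMap_right S x, hxy, h.apply_graphMap_right]

theorem apply_graphMap_graphMap (h : IsDarboux B e f) {S : Matrix ι ι K} (hS : S.IsSymm)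
    (x y : ι → K) : B (graphMap e f S x) (graphMap e f S y) = 0 := by
  have hB : B (graphMap e f S x) (graphMap e f S y) = x ⬝ᵥ S *ᵥ y - (S *ᵥ x) ⬝ᵥ y := by
    conv_lhs => enter [1]; rw [graphMap]
    simp [Fintype.linearCombination_apply, h.apply_left_graphMap, h.apply_right_graphMap,
      dotProduct, sub_eq_add_neg]
  rw [hB, dotProduct_mulVec, ← mulVec_transpose, hS, sub_self]

theorem finrank_range_graphMap [Nontrivial K] (h : IsDarboux B e f) (S : Matrix ι ι K) :
    Module.finrank K (LinearMap.range (graphMap e f S)) = Fintype.card ι := by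
  rw [LinearMap.finrank_range_of_inj (h.graphMap_injective S), Module.finrank_fintype_fun_eq_card]

theorem graphMap_mul_eq (h : IsDarboux B e f) {S : Matrix ι ι K} {m : ℕ} {u : Fin m → M}
    (hu : LinearIndependent K u) (hS : Submodule.span K (Set.range u) ≤ (graphMap e f S).range) :
    LinearIndependent K (Matrix.of fun i a => B (u a) (f i)).col ∧
      S * (Matrix.of fun i a => B (u a) (f i)) = Matrix.of fun i a => B (e i) (u a) := by
  have hmem (a : Fin m) : ∃ x, graphMap e f S x = u a := hS (Submodule.subset_span ⟨a, rfl⟩)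
  choose x hx using hmem
  have hcol : (Matrix.of fun i a => B (u a) (f i)).col = x := by
    ext a i
    simp [← hx, h.apply_graphMap_right]
  constructor
  · rw [hcol]
    refine LinearIndependent.of_comp (graphMap e f S) ?_
    rwa [show graphMap e f S ∘ x = u from funext hx]
  · ext i a
    rw [of_apply, ← hx, h.apply_left_graphMap, ← hcol]
    rfl

end IsDarboux

end Darboux

section WeaklyC1

variable {E M : Type*} [NormedAddCommGroup E] [NormedSpace ℝ E] [AddCommGroup M] [Module ℂ M]

/-- `g` is of class `C¹` after composition with every linear functional. This notion of
differentiability needs no norm on the target, which will be an exterior algebra. -/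
def IsWeaklyC1 (g : E → M) : Prop :=
  ∀ φ : Module.Dual ℂ M, ContDiff ℝ 1 fun p => φ (g p)

namespace IsWeaklyC1

theorem const (x : M) : IsWeaklyC1 fun _ : E => x := fun _ => contDiff_const

theorem add {g h : E → M} (hg : IsWeaklyC1 g) (hh : IsWeaklyC1 h) :
    IsWeaklyC1 fun p => g p + h p := fun φ => by
  simpa only [map_add] using (hg φ).add (hh φ)

theorem smul {c : E → ℂ} {g : E → M} (hc : ContDiff ℝ 1 c) (hg : IsWeaklyC1 g) :
    IsWeaklyC1 fun p => c p • g p := fun φ => by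
  simp only [map_smul]
  exact hc.smul (hg φ)

theorem sum {α : Type*} {s : Finset α} {g : α → E → M} (hg : ∀ a ∈ s, IsWeaklyC1 (g a)) :
    IsWeaklyC1 fun p => ∑ a ∈ s, g a p := fun φ => by
  simpa only [map_sum] using ContDiff.sum fun a ha => hg a ha φ

theorem comp {E' : Type*} [NormedAddCommGroup E'] [NormedSpace ℝ E'] {g : E → M}
    (hg : IsWeaklyC1 g) {r : E' → E} (hr : ContDiff ℝ 1 r) : IsWeaklyC1 fun p => g (r p) :=
  fun φ => (hg φ).comp hr

theorem pivotVec {α : Type*} {m k : ℕ} {g : E → α → M} (hg : ∀ i, IsWeaklyC1 fun p => g p i)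
    (e : Fin m ⊕ Fin k ≃ α) {κ : E → Fin k → Fin m → ℂ} (hκ : ContDiff ℝ 1 κ) (a : Fin m) :
    IsWeaklyC1 fun p => pivotVec (g p) e (κ p) a :=
  (hg _).add <| .sum fun t _ => .smul (contDiff_pi.1 (contDiff_pi.1 hκ t) a) (hg _)

end IsWeaklyC1

theorem finrank_real_fin_fun (c d : ℕ) : Module.finrank ℝ (Fin c → Fin d → ℂ) = 2 * (c * d) := by
  rw [finrank_real_of_complex, Module.finrank_pi_fintype, Finset.sum_const, Finset.card_fin,
    Module.finrank_fin_fun, smul_eq_mul]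

theorem dimH_setOf_exists_le_range_graphMap_le [FiniteDimensional ℝ E] {ι α : Type*} [Fintype ι]
    [DecidableEq ι] [Fintype α] {m k k' : ℕ} (hι : Fintype.card ι = m + k)
    (hα : Fintype.card α = m + k') {B : LinearMap.BilinForm ℂ M} {e f : ι → M}
    (h : IsDarboux B e f) {g : E → α → M} (hg : ∀ i, IsWeaklyC1 fun p => g p i) :
    dimH {Q : Sym2 ι → ℂ | ∃ p, ∃ U ≤ LinearMap.range (graphMap e f (symMatrix Q)),
        Module.finrank ℂ U = m ∧ U ≤ Submodule.span ℂ (Set.range (g p))} ≤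
      (Module.finrank ℝ E + 2 * (k' * m) + 2 * (k + 1).choose 2 : ℕ) := by
  let u (σ : Fin m ⊕ Fin k' ≃ α) (q : E × (Fin k' → Fin m → ℂ)) : Fin m → M :=
    pivotVec (g q.1) σ q.2
  have hu (σ : Fin m ⊕ Fin k' ≃ α) (a : Fin m) : IsWeaklyC1 fun q => u σ q a :=
    .pivotVec (fun i => (hg i).comp contDiff_fst) σ contDiff_snd a
  let X (σ : Fin m ⊕ Fin k' ≃ α) (q : E × (Fin k' → Fin m → ℂ)) : Matrix ι (Fin m) ℂ :=
    Matrix.of fun i a => B (u σ q a) (f i)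
  let Y (σ : Fin m ⊕ Fin k' ≃ α) (q : E × (Fin k' → Fin m → ℂ)) : Matrix ι (Fin m) ℂ :=
    Matrix.of fun i a => B (e i) (u σ q a)
  let T (σ : Fin m ⊕ Fin k' ≃ α) : Set (Sym2 ι → ℂ) :=
    {Q | ∃ q, LinearIndependent ℂ (X σ q).col ∧ symMatrix Q * X σ q = Y σ q}
  refine (dimH_mono (t := ⋃ σ, T σ) ?_).trans ?_
  · rintro Q ⟨p, U, hUQ, hU, hUg⟩
    obtain ⟨σ, κ, rfl⟩ := exists_span_range_pivotVec hUg hU hα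
    have hind : LinearIndependent ℂ (u σ (p, κ)) :=
      linearIndependent_iff_card_eq_finrank_span.2 ((Fintype.card_fin m).trans hU.symm)
    exact Set.mem_iUnion.2 ⟨σ, (p, κ), h.graphMap_mul_eq hind hUQ⟩
  rw [dimH_iUnion, iSup_le_iff, ← finrank_real_fin_fun, ← Module.finrank_prod]
  exact fun σ => dimH_setOf_symMatrix_mul_eq_le hι (fun i a => hu σ a (B.flip (f i)))
    (fun i a => hu σ a (B (e i)))

end WeaklyC1

/-- The `n`-element subsets of `I` containing `i₀`. When `I` has `2 * n` elements they contain one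
subset of each complementary pair, and so index a Darboux family of `⋀ⁿV`. -/
abbrev PointedSubset (I : Type*) (n : ℕ) (i₀ : I) : Type _ :=
  {s : Finset I // s.card = n ∧ i₀ ∈ s}

namespace PointedSubset

variable {I : Type*} {n : ℕ} {i₀ : I} (s t : PointedSubset I n i₀)

theorem not_disjoint : ¬Disjoint (s : Finset I) t :=
  Finset.not_disjoint_iff.2 ⟨i₀, s.2.2, t.2.2⟩

variable [Fintype I] [DecidableEq I]

theorem eq_of_disjoint_compl {s t : PointedSubset I n i₀}
    (h : Disjoint (s : Finset I) (t : Finset I)ᶜ) : s = t :=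
  Subtype.ext <| Finset.eq_of_subset_of_card_le (disjoint_compl_right_iff.1 h) <| by
    rw [s.2.1, t.2.1]

theorem card_compl (hI : Fintype.card I = 2 * n) : (s : Finset I)ᶜ.card = n := by
  rw [Finset.card_compl, hI, s.2.1]
  omega

theorem not_disjoint_compl (hI : Fintype.card I = 2 * n) :
    ¬Disjoint (s : Finset I)ᶜ (t : Finset I)ᶜ := fun h => by
  have heq : (s : Finset I)ᶜ = t :=
    Finset.eq_of_subset_of_card_le (disjoint_compl_right_iff.1 h) <| by rw [t.2.1, s.card_compl hI]
  exact Finset.mem_compl.1 (heq ▸ t.2.2) s.2.2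

end PointedSubset

section ExteriorPowerPairing

variable {K V : Type*} [CommRing K] [AddCommGroup V] [Module K V]

theorem mul_eq_neg_mul_of_mem_exteriorPower {m n : ℕ} (hm : Odd m) (hn : Odd n)
    {x y : ExteriorAlgebra K V} (hx : x ∈ ⋀[K]^m V) (hy : y ∈ ⋀[K]^n V) : x * y = -(y * x) := by
  have hodd {l : ℕ} (hl : Odd l) : ⋀[K]^l V ≤ CliffordAlgebra.evenOdd (0 : QuadraticForm K V) 1 :=
    le_iSup (fun j : {j : ℕ // (j : ZMod 2) = 1} => LinearMap.range (ι K (M := V)) ^ (j : ℕ))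
      ⟨l, ZMod.natCast_eq_one_iff_odd.2 hl⟩
  simpa using CliffordAlgebra.map_mul_map_eq_neg_of_isOrtho_of_mem_evenOdd_one
    (QuadraticMap.Isometry.id (0 : QuadraticForm K V)) (QuadraticMap.Isometry.id 0)
    (fun _ _ => by simp [QuadraticMap.IsOrtho]) x y (hodd hm hx) (hodd hn hy)

/-- The bilinear form `(α, β) ↦ vol (α ∧ β)`; on `⋀³V` it is the symplectic form `σ`. -/
def wedgeForm (vol : ExteriorAlgebra K V →ₗ[K] K) : LinearMap.BilinForm K (ExteriorAlgebra K V) :=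
  (LinearMap.mul K (ExteriorAlgebra K V)).compr₂ vol

@[simp]
theorem wedgeForm_apply (vol : ExteriorAlgebra K V →ₗ[K] K) (x y : ExteriorAlgebra K V) :
    wedgeForm vol x y = vol (x * y) :=
  rfl

variable {I : Type*} [LinearOrder I] (b : Module.Basis I K V)

theorem exteriorAlgebra_basis_mem {n : ℕ} {s : Finset I} (hs : s.card = n) :
    b.ExteriorAlgebra s ∈ ⋀[K]^n V := by
  have hb := basis_eq_coe_basis b (⟨s, hs⟩ : Set.powersetCard I n)
  exact hb ▸ Subtype.property _

theorem exteriorAlgebra_basis_mul_eq_zero {s t : Finset I} (h : ¬Disjoint s t) :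
    b.ExteriorAlgebra s * b.ExteriorAlgebra t = 0 :=
  basis_mul_of_not_disjoint b (⟨s, rfl⟩ : Set.powersetCard I s.card)
    (⟨t, rfl⟩ : Set.powersetCard I t.card) h

theorem exists_exteriorAlgebra_basis_mul_compl_eq [Fintype I] (s : Finset I) :
    ∃ u : ℤˣ, b.ExteriorAlgebra s * b.ExteriorAlgebra sᶜ = u • b.ExteriorAlgebra Finset.univ := by
  have h : Disjoint s sᶜ := disjoint_compl_right
  have hmul := basis_mul_of_disjoint b (s := (⟨s, rfl⟩ : Set.powersetCard I s.card))
    (t := (⟨sᶜ, rfl⟩ : Set.powersetCard I sᶜ.card)) h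
  rw [Set.powersetCard.coe_disjUnion, Finset.disjUnion_eq_union, Finset.union_compl] at hmul
  exact ⟨_, hmul⟩

variable [Fintype I] {vol : ExteriorAlgebra K V →ₗ[K] K}

theorem apply_exteriorAlgebra_basis_univ_ne_zero [Nontrivial K]
    (hvol : Function.Injective fun x : ⋀[K]^(Fintype.card I) V => vol x) :
    vol (b.ExteriorAlgebra Finset.univ) ≠ 0 := fun h =>
  b.ExteriorAlgebra.ne_zero Finset.univ <| congrArg Subtype.val <|
    @hvol ⟨_, exteriorAlgebra_basis_mem b Finset.card_univ⟩ 0 (h.trans (map_zero vol).symm)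

theorem apply_exteriorAlgebra_basis_mul_compl_ne_zero
    (hvol : vol (b.ExteriorAlgebra Finset.univ) ≠ 0) (s : Finset I) :
    vol (b.ExteriorAlgebra s * b.ExteriorAlgebra sᶜ) ≠ 0 := by
  obtain ⟨u, hu⟩ := exists_exteriorAlgebra_basis_mul_compl_eq b s
  rw [hu]
  rcases Int.units_eq_one_or u with rfl | rfl <;> simpa [Units.smul_def] using hvol

end ExteriorPowerPairing

theorem isDarboux_wedgeForm {K V I : Type*} [Field K] [AddCommGroup V] [Module K V] [LinearOrder I]
    [Fintype I] (b : Module.Basis I K V) {n : ℕ} (hn : Odd n) (hI : Fintype.card I = 2 * n) (i₀ : I)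
    {vol : ExteriorAlgebra K V →ₗ[K] K} (hvol : vol (b.ExteriorAlgebra Finset.univ) ≠ 0) :
    IsDarboux (wedgeForm vol) (fun s : PointedSubset I n i₀ => b.ExteriorAlgebra s)
      (fun s => (vol (b.ExteriorAlgebra s * b.ExteriorAlgebra (s : Finset I)ᶜ))⁻¹ •
        b.ExteriorAlgebra (s : Finset I)ᶜ) := by
  have hne (s : PointedSubset I n i₀) := apply_exteriorAlgebra_basis_mul_compl_ne_zero b hvol s
  have hswap (s t : PointedSubset I n i₀) :
      b.ExteriorAlgebra (s : Finset I)ᶜ * b.ExteriorAlgebra t =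
        -(b.ExteriorAlgebra t * b.ExteriorAlgebra (s : Finset I)ᶜ) :=
    mul_eq_neg_mul_of_mem_exteriorPower hn hn (exteriorAlgebra_basis_mem b (s.card_compl hI))
      (exteriorAlgebra_basis_mem b t.2.1)
  have hpair (s t : PointedSubset I n i₀) (hst : s ≠ t) :
      b.ExteriorAlgebra s * b.ExteriorAlgebra (t : Finset I)ᶜ = 0 :=
    exteriorAlgebra_basis_mul_eq_zero b fun h => hst (PointedSubset.eq_of_disjoint_compl h)
  constructor <;> intro s t
  · simp [exteriorAlgebra_basis_mul_eq_zero b (s.not_disjoint t)]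
  · simp [exteriorAlgebra_basis_mul_eq_zero b (s.not_disjoint_compl t hI)]
  · rcases eq_or_ne s t with rfl | hst
    · simp [hne s]
    · simp [hpair s t hst, hst]
  · rcases eq_or_ne s t with rfl | hst
    · simp [hswap, hne s]
    · simp [hswap, hpair t s hst.symm, hst]

section ExteriorProducts

variable {K V : Type*} [CommRing K] [AddCommGroup V] [Module K V]

theorem alternatingMap_apply_mem_span_singleton {N κ : Type*} [AddCommGroup N] [Module K N]
    [Finite κ] (F : V [⋀^κ]→ₗ[K] N) {v w : κ → V}
    (hv : ∀ i, v i ∈ Submodule.span K (Set.range w)) : F v ∈ Submodule.span K {F w} := by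
  classical
  cases nonempty_fintype κ
  choose c hc using fun i => (Submodule.mem_span_range_iff_exists_fun K).1 (hv i)
  rw [← funext hc, ← AlternatingMap.coe_multilinearMap, MultilinearMap.map_sum]
  refine Submodule.sum_mem _ fun r _ => ?_
  rw [MultilinearMap.map_smul_univ]
  refine Submodule.smul_mem _ _ ?_
  rw [AlternatingMap.coe_multilinearMap]
  by_cases hr : Function.Injective r
  · have hperm := F.map_perm w (Equiv.ofBijective r (Finite.injective_iff_bijective.1 hr))
    rw [Units.smul_def, ← Int.cast_smul_eq_zsmul K] at hperm
    exact Submodule.mem_span_singleton.2 ⟨_, hperm.symm⟩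
  · rw [F.map_eq_zero_of_not_injective (fun i => w (r i)) fun h => hr (.of_comp (f := w) h)]
    exact zero_mem _

theorem exists_ι_mul_eq_ι_mul_map {H : Type*} [AddCommGroup H] [Module K H] {j : H →ₗ[K] V} {w : V}
    (hj : Submodule.span K {w} ⊔ LinearMap.range j = ⊤) {n : ℕ} {x : ExteriorAlgebra K V}
    (hx : x ∈ ⋀[K]^n V) : ∃ y ∈ ⋀[K]^n H, ι K w * x = ι K w * ExteriorAlgebra.map j y := by
  induction hx using Submodule.pow_induction_on_left' with
  | algebraMap r => exact ⟨algebraMap K _ r, Submodule.algebraMap_mem r, by simp⟩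
  | add x y n _ _ hx hy =>
    obtain ⟨x', hx', hxx⟩ := hx
    obtain ⟨y', hy', hyy⟩ := hy
    exact ⟨x' + y', add_mem hx' hy', by rw [map_add, mul_add, mul_add, hxx, hyy]⟩
  | mem_mul m hm n x _ hx =>
    obtain ⟨v, rfl⟩ := hm
    obtain ⟨y, hy, hxy⟩ := hx
    obtain ⟨_, hcw, _, ⟨h, rfl⟩, rfl⟩ := Submodule.mem_sup.1 (hj ▸ Submodule.mem_top : v ∈ _)
    obtain ⟨c, rfl⟩ := Submodule.mem_span_singleton.1 hcw
    have hswap (u : V) (z : ExteriorAlgebra K V) :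
        ι K w * (ι K u * z) = -(ι K u * (ι K w * z)) := by
      rw [← mul_assoc, ← mul_assoc, ← neg_mul, eq_neg_of_add_eq_zero_left (ι_add_mul_swap w u)]
    refine ⟨ι K h * y, ?_, ?_⟩
    · rw [exteriorPower, pow_succ']
      exact Submodule.mul_mem_mul ⟨h, rfl⟩ hy
    · rw [map_mul, map_apply_ι, hswap, hswap, ← hxy, map_add, add_mul, map_smul, smul_mul_assoc,
        ← mul_assoc (ι K w) (ι K w), ι_sq_zero, zero_mul, smul_zero, zero_add]

theorem map_mulLeft_ι_le_of_mem_span {v w : V} (hv : v ∈ Submodule.span K {w})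
    (W : Submodule K (ExteriorAlgebra K V)) :
    W.map (LinearMap.mulLeft K (ι K v)) ≤ W.map (LinearMap.mulLeft K (ι K w)) := by
  obtain ⟨a, rfl⟩ := Submodule.mem_span_singleton.1 hv
  rintro _ ⟨x, hx, rfl⟩
  exact ⟨a • x, W.smul_mem a hx, by simp⟩

theorem map_mulLeft_ι_exteriorPower_le {H J : Type*} [AddCommGroup H] [Module K H] [LinearOrder J]
    (c : Module.Basis J K H) {j : H →ₗ[K] V} {w : V}
    (hj : Submodule.span K {w} ⊔ LinearMap.range j = ⊤) (n : ℕ) :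
    (⋀[K]^n V).map (LinearMap.mulLeft K (ι K w)) ≤ Submodule.span K
      (Set.range fun s : Set.powersetCard J n =>
        ι K w * ExteriorAlgebra.map j (c.ExteriorAlgebra s)) := by
  rintro _ ⟨x, hx, rfl⟩
  obtain ⟨y, hy, hxy⟩ := exists_ι_mul_eq_ι_mul_map hj hx
  rw [LinearMap.mulLeft_apply, hxy]
  have hspan : y ∈ Submodule.span K
      (Set.range fun s : Set.powersetCard J n => c.ExteriorAlgebra s) := by
    have hmap := Submodule.mem_map_of_mem (f := (⋀[K]^n H).subtype)
      ((c.exteriorPower n).mem_span ⟨y, hy⟩)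
    rw [Submodule.map_span, ← Set.range_comp] at hmap
    rwa [show (fun s : Set.powersetCard J n => c.ExteriorAlgebra s) = _ from
      funext fun s => basis_eq_coe_basis c s]
  have hmap := Submodule.mem_map_of_mem
    (f := LinearMap.mulLeft K (ι K w) ∘ₗ (ExteriorAlgebra.map j).toLinearMap) hspan
  rwa [Submodule.map_span, ← Set.range_comp] at hmap

end ExteriorProducts

namespace IsWeaklyC1

variable {E M N P : Type*} [NormedAddCommGroup E] [NormedSpace ℝ E] [AddCommGroup M] [Module ℂ M]
  [AddCommGroup N] [Module ℂ N] [AddCommGroup P] [Module ℂ P]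

theorem map {g : E → M} (hg : IsWeaklyC1 g) (L : M →ₗ[ℂ] N) : IsWeaklyC1 fun p => L (g p) :=
  fun φ => hg (φ ∘ₗ L)

theorem map₂ [FiniteDimensional ℂ M] (L : M →ₗ[ℂ] N →ₗ[ℂ] P) {g : E → M} {h : E → N}
    (hg : IsWeaklyC1 g) (hh : IsWeaklyC1 h) : IsWeaklyC1 fun p => L (g p) (h p) := by
  let b := Module.finBasis ℂ M
  have hb (p : E) : L (g p) (h p) = ∑ i, b.coord i (g p) • L (b i) (h p) := by
    conv_lhs => rw [← b.sum_repr (g p)]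
    simp only [map_sum, map_smul, LinearMap.sum_apply, LinearMap.smul_apply,
      Module.Basis.coord_apply]
  simp only [hb]
  exact .sum fun i _ => .smul (hg _) (hh.map _)

theorem ι_mul {V : Type*} [AddCommGroup V] [Module ℂ V] [FiniteDimensional ℂ V] {w : E → V}
    {g : E → ExteriorAlgebra ℂ V} (hw : IsWeaklyC1 w) (hg : IsWeaklyC1 g) :
    IsWeaklyC1 fun p => ι ℂ (w p) * g p :=
  .map₂ (LinearMap.mul ℂ (ExteriorAlgebra ℂ V) ∘ₗ ι ℂ) hw hg

theorem ιMulti {V : Type*} [AddCommGroup V] [Module ℂ V] [FiniteDimensional ℂ V] {n : ℕ}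
    {w : E → Fin n → V} (hw : ∀ i, IsWeaklyC1 fun p => w p i) :
    IsWeaklyC1 fun p => ιMulti ℂ n (w p) := by
  induction n with
  | zero => simpa using IsWeaklyC1.const _
  | succ n ih =>
    simp only [ιMulti_succ_apply]
    exact (hw 0).ι_mul (ih fun i => hw i.succ)

end IsWeaklyC1

section BadSets

variable {V I : Type*} [AddCommGroup V] [Module ℂ V] [FiniteDimensional ℂ V] [Fintype I]
  [DecidableEq I] {B : LinearMap.BilinForm ℂ (ExteriorAlgebra ℂ V)}
  {e f : I → ExteriorAlgebra ℂ V} {d c k : ℕ}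

theorem dimH_setOf_exists_ιMulti_mem_range_graphMap_le (h : IsDarboux B e f)
    (hV : Module.finrank ℂ V = d + c) (hI : Fintype.card I = 1 + k) :
    dimH {Q : Sym2 I → ℂ | ∃ v : Fin d → V, ιMulti ℂ d v ≠ 0 ∧
        ιMulti ℂ d v ∈ LinearMap.range (graphMap e f (symMatrix Q))} ≤
      (2 * (c * d) + 2 * (k + 1).choose 2 : ℕ) := by
  let b := Module.finBasisOfFinrankEq ℂ V hV
  let w (σ : Fin d ⊕ Fin c ≃ Fin (d + c)) (κ : Fin c → Fin d → ℂ) : Fin d → V := pivotVec b σ κ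
  have hw (σ : Fin d ⊕ Fin c ≃ Fin (d + c)) (a : Fin d) : IsWeaklyC1 fun κ => w σ κ a :=
    .pivotVec (fun _ => .const (b _)) σ contDiff_id a
  let T (σ : Fin d ⊕ Fin c ≃ Fin (d + c)) : Set (Sym2 I → ℂ) :=
    {Q | ∃ κ, ∃ U ≤ LinearMap.range (graphMap e f (symMatrix Q)), Module.finrank ℂ U = 1 ∧
        U ≤ Submodule.span ℂ (Set.range fun _ : Unit => ιMulti ℂ d (w σ κ))}
  refine (dimH_mono (t := ⋃ σ, T σ) ?_).trans ?_
  · rintro Q ⟨v, hv, hvQ⟩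
    have hind : LinearIndependent ℂ v := by
      contrapose! hv
      exact (ιMulti ℂ d).map_linearDependent v hv
    obtain ⟨σ, κ, hσ⟩ := exists_span_range_pivotVec_of_basis b (Submodule.span ℂ (Set.range v))
      (by rw [finrank_span_eq_card hind, Fintype.card_fin]) (Fintype.card_fin _)
    refine Set.mem_iUnion.2
      ⟨σ, κ, Submodule.span ℂ {ιMulti ℂ d v}, ?_, finrank_span_singleton hv, ?_⟩
    · rwa [Submodule.span_singleton_le_iff_mem]
    · rw [Set.range_const, Submodule.span_singleton_le_iff_mem]
      refine alternatingMap_apply_mem_span_singleton _ fun i => ?_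
      exact hσ ▸ Submodule.subset_span ⟨i, rfl⟩
  rw [dimH_iUnion, iSup_le_iff]
  intro σ
  refine (dimH_setOf_exists_le_range_graphMap_le hI (k' := 0) rfl h
    fun _ => .ιMulti (hw σ)).trans_eq ?_
  simp [finrank_real_fin_fun]

theorem dimH_setOf_exists_le_finrank_range_graphMap_inf_le {n m k' : ℕ} (h : IsDarboux B e f)
    (hV : Module.finrank ℂ V = 1 + c) (hI : Fintype.card I = m + k) (hm : c.choose n = m + k') :
    dimH {Q : Sym2 I → ℂ | ∃ v : V, v ≠ 0 ∧ m ≤ Module.finrank ℂ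
        ↥(LinearMap.range (graphMap e f (symMatrix Q)) ⊓
          (⋀[ℂ]^n V).map (LinearMap.mulLeft ℂ (ι ℂ v)))} ≤
      (2 * c + 2 * (k' * m) + 2 * (k + 1).choose 2 : ℕ) := by
  let b := Module.finBasisOfFinrankEq ℂ V hV
  let w (σ : Fin 1 ⊕ Fin c ≃ Fin (1 + c)) (κ : Fin c → Fin 1 → ℂ) : V := pivotVec b σ κ 0
  have hw (σ : Fin 1 ⊕ Fin c ≃ Fin (1 + c)) : IsWeaklyC1 (w σ) :=
    .pivotVec (fun _ => .const (b _)) σ contDiff_id 0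
  let j (σ : Fin 1 ⊕ Fin c ≃ Fin (1 + c)) : (Fin c → ℂ) →ₗ[ℂ] V :=
    Fintype.linearCombination ℂ fun t => b (σ (.inr t))
  have hj (σ : Fin 1 ⊕ Fin c ≃ Fin (1 + c)) (κ : Fin c → Fin 1 → ℂ) :
      Submodule.span ℂ {w σ κ} ⊔ LinearMap.range (j σ) = ⊤ := by
    have hsup := span_range_pivotVec_sup b σ κ
    rwa [b.span_eq, Set.range_unique, ← Fintype.range_linearCombination] at hsup
  let g (σ : Fin 1 ⊕ Fin c ≃ Fin (1 + c)) (κ : Fin c → Fin 1 → ℂ) (s : Set.powersetCard (Fin c) n) :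
      ExteriorAlgebra ℂ V :=
    ι ℂ (w σ κ) * ExteriorAlgebra.map (j σ) ((Pi.basisFun ℂ (Fin c)).ExteriorAlgebra s)
  let T (σ : Fin 1 ⊕ Fin c ≃ Fin (1 + c)) : Set (Sym2 I → ℂ) :=
    {Q | ∃ κ, ∃ U ≤ LinearMap.range (graphMap e f (symMatrix Q)), Module.finrank ℂ U = m ∧
        U ≤ Submodule.span ℂ (Set.range (g σ κ))}
  refine (dimH_mono (t := ⋃ σ, T σ) ?_).trans ?_
  · rintro Q ⟨v, hv, hvQ⟩
    obtain ⟨σ, κ, hσ⟩ := exists_span_range_pivotVec_of_basis b (Submodule.span ℂ {v})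
      (finrank_span_singleton hv) (Fintype.card_fin _)
    have hvw : v ∈ Submodule.span ℂ {w σ κ} := by
      rw [Set.range_unique] at hσ
      exact hσ ▸ Submodule.mem_span_singleton_self v
    obtain ⟨U, hU, hUm⟩ := exists_le_finrank_eq hvQ
    exact Set.mem_iUnion.2 ⟨σ, κ, U, hU.trans inf_le_left, hUm,
      (hU.trans inf_le_right).trans <| (map_mulLeft_ι_le_of_mem_span hvw _).trans <|
        map_mulLeft_ι_exteriorPower_le _ (hj σ κ) n⟩
  rw [dimH_iUnion, iSup_le_iff]
  intro σ
  have hcard : Fintype.card (Set.powersetCard (Fin c) n) = m + k' := by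
    rw [← Nat.card_eq_fintype_card, Set.powersetCard.card, Nat.card_fin, hm]
  refine (dimH_setOf_exists_le_range_graphMap_le hI hcard h
    fun _ => (hw σ).ι_mul (.const _)).trans_eq ?_
  simp [finrank_real_fin_fun]

end BadSets

theorem exists_isSymm_graphMap_generic {V I : Type*} [AddCommGroup V] [Module ℂ V]
    [FiniteDimensional ℂ V] [Fintype I] [DecidableEq I]
    {B : LinearMap.BilinForm ℂ (ExteriorAlgebra ℂ V)} {e f : I → ExteriorAlgebra ℂ V}
    (h : IsDarboux B e f) (hV : Module.finrank ℂ V = 6) (hI : Fintype.card I = 10) :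
    ∃ S : Matrix I I ℂ, S.IsSymm ∧
      (∀ v, ιMulti ℂ 3 v ∈ LinearMap.range (graphMap e f S) → ιMulti ℂ 3 v = 0) ∧
      ∀ v ≠ 0, Module.finrank ℂ ↥(LinearMap.range (graphMap e f S) ⊓
        (⋀[ℂ]^2 V).map (LinearMap.mulLeft ℂ (ι ℂ v))) ≤ 2 := by
  have hdec := dimH_setOf_exists_ιMulti_mem_range_graphMap_le (d := 3) (c := 3) (k := 9) h hV hI
  have hF := dimH_setOf_exists_le_finrank_range_graphMap_inf_le (c := 5) (n := 2) (m := 3) (k := 7)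
    (k' := 7) h hV hI rfl
  have hlt : dimH _ < Module.finrank ℝ (Sym2 I → ℂ) :=
    calc
      _ = max (dimH _) (dimH _) := dimH_union _ _
      _ ≤ (108 : ℕ) := max_le hdec hF
      _ < Module.finrank ℝ (Sym2 I → ℂ) := by
        rw [finrank_real_sym2_fun, hI]
        exact Nat.cast_lt.2 (by decide)
  obtain ⟨Q, hQ⟩ := (dense_compl_of_dimH_lt_finrank hlt).nonempty
  simp only [Set.mem_compl_iff, Set.mem_union, Set.mem_ofPred_eq, not_or, not_exists, not_and,
    not_le] at hQ
  exact ⟨symMatrix Q, symMatrix_isSymm Q, fun v hv => by_contra fun h0 => hQ.1 v h0 hv,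
    fun v hv => Nat.le_of_lt_succ (hQ.2 v hv)⟩

/-- There exists a Lagrangian subspace `A` of `(⋀³V, σ)` containing no
nonzero completely decomposable element `v₀∧v₁∧v₂` and with `dim(A ∩ F_v) ≤ 2` for
every nonzero `v ∈ V`; i.e. the set `𝕃𝔾(⋀³V)⁰` is nonempty. -/
theorem stmt18 (V : Type*) [AddCommGroup V] [Module ℂ V] [FiniteDimensional ℂ V]
    (hV : Module.finrank ℂ V = 6)
    (vol : ExteriorAlgebra ℂ V →ₗ[ℂ] ℂ)
    (hvol : Function.Bijective fun x : ⋀[ℂ]^6 V => vol x) :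
    ∃ A : Submodule ℂ (ExteriorAlgebra ℂ V),
      A ≤ ⋀[ℂ]^3 V ∧ Module.finrank ℂ A = 10 ∧
      (∀ x ∈ A, ∀ y ∈ A, vol (x * y) = 0) ∧
      (∀ x ∈ A, (∃ v₀ v₁ v₂ : V, x = ι ℂ v₀ * (ι ℂ v₁ * ι ℂ v₂)) → x = 0) ∧
      ∀ v : V, v ≠ 0 → Module.finrank ℂ ↥(A ⊓ Fsub v) ≤ 2 := by
  let b : Module.Basis (Fin 6) ℂ V := Module.finBasisOfFinrankEq ℂ V hV
  have h := isDarboux_wedgeForm b (n := 3) (by decide) rfl 0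
    (apply_exteriorAlgebra_basis_univ_ne_zero b hvol.1)
  have hI : Fintype.card (PointedSubset (Fin 6) 3 0) = 10 := by decide
  obtain ⟨S, hS, hdec, hF⟩ := exists_isSymm_graphMap_generic h hV hI
  refine ⟨LinearMap.range (graphMap _ _ S), range_graphMap_le (fun s => ?_) (fun s => ?_) S,
    (h.finrank_range_graphMap S).trans hI, ?_, ?_, hF⟩
  · exact exteriorAlgebra_basis_mem b s.2.1
  · exact Submodule.smul_mem _ _ (exteriorAlgebra_basis_mem b (s.card_compl rfl))
  · rintro _ ⟨x, rfl⟩ _ ⟨y, rfl⟩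
    exact h.apply_graphMap_graphMap hS x y
  · rintro _ hx ⟨v₀, v₁, v₂, rfl⟩
    have hι : ι ℂ v₀ * (ι ℂ v₁ * ι ℂ v₂) = ιMulti ℂ 3 ![v₀, v₁, v₂] := by
      simp [ιMulti_apply]
    rw [hι] at hx ⊢
    exact hdec _ hx
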